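/- arXiv:1304.0231 — 15 statements merged into one kernel-verified Lean document; each statement's English description precedes it below -/
import Mathlib

section
/- Let K be a field. The set O (consisting of all osculating tangents ℓ(u₁,u₂) of the Cayley surface together with the line g∞) is a partial spread of P₃(K) — i.e., any two distinct members of O have trivial intersection as subspaces of K⁴ — if and only if the characteristic of K is not 3 and 1 is the only cube root of unity in K (for all w ∈ K, w³ = 1 implies w = 1). -/
/-- The Cayley cubic form `f(x₀,x₁,x₂,x₃) = x₀x₁x₂ − x₁³ − x₀²x₃`. -/
def cayleyF {K : Type*} [Field K] (x : Fin 4 → K) : K :=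
  x 0 * x 1 * x 2 - (x 1) ^ 3 - (x 0) ^ 2 * x 3

/-- The affine point `P(u₁,u₂)` of the Cayley surface. -/
def cayleyP (K : Type*) [Field K] (u₁ u₂ : K) : Fin 4 → K :=
  ![1, u₁, u₂, u₁ * u₂ - u₁ ^ 3]

/-- The direction vector `d(u₁,u₂) = (0,1,3u₁,u₂)`. -/
def cayleyD (K : Type*) [Field K] (u₁ u₂ : K) : Fin 4 → K :=
  ![0, 1, 3 * u₁, u₂]

/-- The osculating tangent `ℓ(u₁,u₂) = span{P(u₁,u₂), d(u₁,u₂)}`. -/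
def oscTang (K : Type*) [Field K] (u₁ u₂ : K) : Submodule K (Fin 4 → K) :=
  Submodule.span K {cayleyP K u₁ u₂, cayleyD K u₁ u₂}

/-- The line `g∞ = span{(0,0,1,0), (0,0,0,1)}`. -/
def gInf (K : Type*) [Field K] : Submodule K (Fin 4 → K) :=
  Submodule.span K {![0, 0, 1, 0], ![0, 0, 0, 1]}

/-- The Betten–Walker line set `O`: all osculating tangents together with `g∞`. -/
def BWset (K : Type*) [Field K] : Set (Submodule K (Fin 4 → K)) :=
  {ℓ | ∃ u₁ u₂ : K, ℓ = oscTang K u₁ u₂} ∪ {gInf K}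

theorem mem_oscTang_iff {K : Type*} [Field K] (u₁ u₂ : K) (x : Fin 4 → K) :
    x ∈ oscTang K u₁ u₂ ↔ x 2 = x 0 * u₂ + (x 1 - x 0 * u₁) * (3 * u₁) ∧
      x 3 = x 0 * (u₁ * u₂ - u₁ ^ 3) + (x 1 - x 0 * u₁) * u₂ := by
  unfold oscTang cayleyP cayleyD
  rw [Submodule.mem_span_pair]
  constructor
  · rintro ⟨a, b, rfl⟩
    simp
  · rintro ⟨h2, h3⟩
    refine ⟨x 0, x 1 - x 0 * u₁, ?_⟩
    ext i
    fin_cases i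
    · simp
    · simp
    · simp [h2]
    · simp [h3]

theorem mem_gInf_iff {K : Type*} [Field K] (x : Fin 4 → K) :
    x ∈ gInf K ↔ x 0 = 0 ∧ x 1 = 0 := by
  unfold gInf
  rw [Submodule.mem_span_pair]
  constructor
  · rintro ⟨a, b, rfl⟩
    simp
  · rintro ⟨h0, h1⟩
    refine ⟨x 2, x 3, ?_⟩
    ext i
    fin_cases i <;> simp [h0, h1]

theorem three_ne_zero_iff_ringChar {K : Type*} [Field K] : ringChar K ≠ 3 ↔ (3 : K) ≠ 0 := by
  refine not_congr ⟨fun h => ?_, fun h => ?_⟩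
  · have := ringChar.Nat.cast_ringChar (R := K)
    rw [h] at this
    exact_mod_cast this
  · have hd : ringChar K ∣ 3 := ringChar.dvd (by exact_mod_cast h)
    rcases (Nat.dvd_prime Nat.prime_three).1 hd with h1 | h1
    · exact absurd h1 (CharP.ringChar_ne_one)
    · exact h1

theorem osc_gInf_zero {K : Type*} [Field K] (u₁ u₂ : K) (x : Fin 4 → K)
    (h : x ∈ oscTang K u₁ u₂) (h' : x ∈ gInf K) : x = 0 := by
  rw [mem_oscTang_iff] at h
  rw [mem_gInf_iff] at h'
  obtain ⟨h0, h1⟩ := h'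
  obtain ⟨h2, h3⟩ := h
  ext i
  fin_cases i <;> simp_all

theorem osc_osc {K : Type*} [Field K] (h3 : (3 : K) ≠ 0) (hw : ∀ w : K, w ^ 3 = 1 → w = 1)
    (u₁ u₂ v₁ v₂ : K) (x : Fin 4 → K)
    (h : x ∈ oscTang K u₁ u₂) (h' : x ∈ oscTang K v₁ v₂) (hx : x ≠ 0) :
    u₁ = v₁ ∧ u₂ = v₂ := by
  rw [mem_oscTang_iff] at h h'
  obtain ⟨a2, a3⟩ := h
  obtain ⟨b2, b3⟩ := h'
  by_cases h0 : x 0 = 0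
  · have h1 : x 1 ≠ 0 := by
      intro h1
      apply hx
      ext i
      fin_cases i <;> simp_all
    simp only [h0, zero_mul, sub_zero, zero_add] at a2 a3 b2 b3
    have e1 : x 1 * (3 * u₁) = x 1 * (3 * v₁) := a2.symm.trans b2
    have e2 : x 1 * u₂ = x 1 * v₂ := a3.symm.trans b3
    exact ⟨mul_left_cancel₀ h3 (mul_left_cancel₀ h1 e1), mul_left_cancel₀ h1 e2⟩
  · have cube : (x 1 - x 0 * u₁) ^ 3 = (x 1 - x 0 * v₁) ^ 3 := by
      linear_combination (x 0) ^ 2 * b3 - (x 0) ^ 2 * a3 + x 0 * x 1 * a2 - x 0 * x 1 * b2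
    have key : x 1 - x 0 * u₁ = x 1 - x 0 * v₁ := by
      by_cases hv : x 1 - x 0 * v₁ = 0
      · rw [hv] at cube ⊢
        exact pow_eq_zero_iff (three_ne_zero) |>.1 (by simpa using cube)
      · have := hw ((x 1 - x 0 * u₁) / (x 1 - x 0 * v₁)) (by
          rw [div_pow, cube, div_self (pow_ne_zero 3 hv)])
        exact (div_eq_one_iff_eq hv).1 this
    have e1 : u₁ = v₁ := mul_left_cancel₀ h0 (by linear_combination -key)
    subst e1
    exact ⟨rfl, mul_left_cancel₀ h0 (by linear_combination b2 - a2)⟩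

/-- `O` is a partial spread of `P₃(K)` iff `char K ≠ 3` and `1` is the
only cube root of unity in `K`. -/
theorem bw_partial_spread_iff (K : Type*) [Field K] :
    (∀ ℓ ∈ BWset K, ∀ m ∈ BWset K, ℓ ≠ m → ℓ ⊓ m = ⊥) ↔
      (ringChar K ≠ 3 ∧ ∀ w : K, w ^ 3 = 1 → w = 1) := by
  rw [three_ne_zero_iff_ringChar]
  constructor
  · intro H
    have H' : ∀ u₁ u₂ v₁ v₂ : K, ∀ x y : Fin 4 → K, x ∈ oscTang K u₁ u₂ → x ∈ oscTang K v₁ v₂ →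
        y ∈ oscTang K u₁ u₂ → y ∉ oscTang K v₁ v₂ → x = 0 := by
      intro u₁ u₂ v₁ v₂ x y hx hx' hy hy'
      have := H _ (Or.inl ⟨u₁, u₂, rfl⟩) _ (Or.inl ⟨v₁, v₂, rfl⟩) (fun e => hy' (e ▸ hy))
      have hm : x ∈ oscTang K u₁ u₂ ⊓ oscTang K v₁ v₂ := ⟨hx, hx'⟩
      rw [this] at hm
      simpa using hm
    have h3 : (3 : K) ≠ 0 := by
      intro h3
      have := H' 0 0 1 0 ![0, 1, 0, 0] ![1, 0, 0, 0] (by simp [mem_oscTang_iff])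
        (by simp [mem_oscTang_iff, h3]) (by simp [mem_oscTang_iff]) (by simp [mem_oscTang_iff])
      simpa using congrFun this 1
    refine ⟨h3, fun w hw => ?_⟩
    by_contra hne
    have := H' 1 3 w (3 * w ^ 2) ![1, 0, 0, -1] ![0, 1, 3, 3]
      (by simp [mem_oscTang_iff]; norm_num)
      (by
        simp only [mem_oscTang_iff]
        simp
        exact ⟨by ring, by linear_combination hw⟩)
      (by simp [mem_oscTang_iff])
      (by
        simp only [mem_oscTang_iff]
        rintro ⟨h, -⟩
        simp at h
        exact hne (mul_left_cancel₀ h3 (by rw [← h, mul_one])))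
    simpa using congrFun this 0
  · rintro ⟨h3, hw⟩ ℓ hℓ m hm hne
    rw [Submodule.eq_bot_iff]
    rintro x ⟨hx, hx'⟩
    by_contra hx0
    rcases hℓ with ⟨u₁, u₂, rfl⟩ | rfl <;> rcases hm with ⟨v₁, v₂, rfl⟩ | rfl
    · obtain ⟨rfl, rfl⟩ := osc_osc h3 hw _ _ _ _ x hx hx' hx0
      exact hne rfl
    · exact hx0 (osc_gInf_zero _ _ x hx hx')
    · exact hx0 (osc_gInf_zero _ _ x hx' hx)
    · exact hne rfl
end

section
/- Let K be a field of characteristic ≠ 3 in which every element has exactly one cube root. Then O is a dual spread of P₃(K): every 3-dimensional subspace of K⁴ contains exactly one member of O. -/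
lemma bw_exists_coeffs (K : Type*) [Field K] (H : Submodule K (Fin 4 → K))
    (hH : Module.finrank K H = 3) :
    ∃ a b c d : K, (a ≠ 0 ∨ b ≠ 0 ∨ c ≠ 0 ∨ d ≠ 0) ∧
      ∀ x : Fin 4 → K, x ∈ H ↔ a * x 0 + b * x 1 + c * x 2 + d * x 3 = 0 := by
  have hlt : H < ⊤ := by
    rw [lt_top_iff_ne_top]
    rintro rfl
    simp at hH
  obtain ⟨φ, hφ, hle⟩ := Submodule.exists_le_ker_of_lt_top H hlt
  have hker : Module.finrank K (LinearMap.ker φ) = 3 := by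
    have h1 := LinearMap.finrank_range_add_finrank_ker φ
    have h2 : LinearMap.range φ = ⊤ := LinearMap.range_eq_top.2 (LinearMap.surjective hφ)
    rw [h2] at h1
    simp at h1
    omega
  have heq : H = LinearMap.ker φ := Submodule.eq_of_le_of_finrank_eq hle (by rw [hH, hker])
  have hf : ∀ x : Fin 4 → K, φ x = φ (Pi.single 0 1) * x 0 + φ (Pi.single 1 1) * x 1
      + φ (Pi.single 2 1) * x 2 + φ (Pi.single 3 1) * x 3 := by
    intro x
    have := LinearMap.pi_apply_eq_sum_univ φ x
    rw [this, Fin.sum_univ_four]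
    have e : ∀ i : Fin 4, (fun j => if i = j then (1:K) else 0) = Pi.single i 1 := by
      intro i
      ext j
      simp [Pi.single_apply, eq_comm]
    simp only [e, smul_eq_mul]
    ring
  refine ⟨_, _, _, _, ?_, fun x => by rw [heq, LinearMap.mem_ker, hf x]⟩
  by_contra! hcon
  apply hφ
  refine LinearMap.ext fun x => ?_
  rw [hf x]
  simp [hcon]

lemma bw_osc_le (K : Type*) [Field K] (H : Submodule K (Fin 4 → K)) (a b c d : K)
    (h : ∀ x : Fin 4 → K, x ∈ H ↔ a * x 0 + b * x 1 + c * x 2 + d * x 3 = 0) (u v : K) :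
    oscTang K u v ≤ H ↔ (a + b * u + c * v + d * (u * v - u ^ 3) = 0 ∧
      b + c * (3 * u) + d * v = 0) := by
  simp [oscTang, Submodule.span_le, Set.insert_subset_iff, h, cayleyP, cayleyD]

lemma bw_inf_le (K : Type*) [Field K] (H : Submodule K (Fin 4 → K)) (a b c d : K)
    (h : ∀ x : Fin 4 → K, x ∈ H ↔ a * x 0 + b * x 1 + c * x 2 + d * x 3 = 0) :
    gInf K ≤ H ↔ (c = 0 ∧ d = 0) := by
  simp [gInf, Submodule.span_le, Set.insert_subset_iff, h]

/-- if `char K ≠ 3` and every element of `K` has exactly one cube root,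
then `O` is a dual spread: every 3-dimensional subspace of `K⁴` contains exactly one
member of `O`. -/
theorem bw_dual_spread (K : Type*) [Field K]
    (hchar : ringChar K ≠ 3) (hroot : ∀ a : K, ∃! r : K, r ^ 3 = a) :
    ∀ H : Submodule K (Fin 4 → K), Module.finrank K H = 3 →
      ∃! ℓ : Submodule K (Fin 4 → K), ℓ ∈ BWset K ∧ ℓ ≤ H := by
  intro H hH
  have h3 : (3 : K) ≠ 0 := by
    intro h
    have h' : ((3 : ℕ) : K) = 0 := by exact_mod_cast h
    rcases (Nat.dvd_prime Nat.prime_three).1 ((ringChar.spec K 3).1 h') with h1 | h1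
    · have := (ringChar.spec K 1).2 (by rw [h1])
      simp at this
    · exact hchar h1
  obtain ⟨a, b, c, d, hne, h⟩ := bw_exists_coeffs K H hH
  have ho := bw_osc_le K H a b c d h
  have hi := bw_inf_le K H a b c d h
  -- it suffices to find a unique parameter pair
  have key : ¬ (c = 0 ∧ d = 0) →
      (∃ u v : K, ((a + b * u + c * v + d * (u * v - u ^ 3) = 0 ∧
        b + c * (3 * u) + d * v = 0)) ∧ ∀ u' v' : K,
        (a + b * u' + c * v' + d * (u' * v' - u' ^ 3) = 0 ∧
        b + c * (3 * u') + d * v' = 0) → u' = u ∧ v' = v) →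
      ∃! ℓ : Submodule K (Fin 4 → K), ℓ ∈ BWset K ∧ ℓ ≤ H := by
    rintro hcd ⟨u, v, huv, huniq⟩
    refine ⟨oscTang K u v, ⟨Or.inl ⟨u, v, rfl⟩, (ho u v).2 huv⟩, ?_⟩
    rintro ℓ ⟨⟨u', v', rfl⟩ | hl, hle⟩
    · obtain ⟨rfl, rfl⟩ := huniq u' v' ((ho u' v').1 hle)
      rfl
    · rw [Set.mem_singleton_iff] at hl
      subst hl
      exact absurd (hi.1 hle) hcd
  by_cases hd : d = 0
  · by_cases hc : c = 0
    · refine ⟨gInf K, ⟨Or.inr rfl, hi.2 ⟨hc, hd⟩⟩, ?_⟩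
      rintro ℓ ⟨⟨u', v', rfl⟩ | hl, hle⟩
      · exfalso
        obtain ⟨e1, e2⟩ := (ho u' v').1 hle
        subst hc hd
        have hb : b = 0 := by simpa using e2
        subst hb
        have ha : a = 0 := by simpa using e1
        simp [ha] at hne
      · exact hl
    · apply key (fun hh => hc hh.1)
      subst hd
      refine ⟨-b / (3 * c), -(a + b * (-b / (3 * c))) / c, ⟨?_, ?_⟩, ?_⟩
      · field_simp
        ring
      · field_simp
        ring
      · rintro u v ⟨e1, e2⟩
        have hu : u = -b / (3 * c) := by
          field_simp
          linear_combination e2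
        refine ⟨hu, ?_⟩
        rw [← hu]
        field_simp
        linear_combination e1
  · apply key (fun hh => hd hh.2)
    obtain ⟨a, rfl⟩ : ∃ a', a = d * a' := ⟨a / d, by field_simp⟩
    obtain ⟨b, rfl⟩ : ∃ b', b = d * b' := ⟨b / d, by field_simp⟩
    obtain ⟨c, rfl⟩ : ∃ c', c = d * c' := ⟨c / d, by field_simp⟩
    obtain ⟨r, hr, hru⟩ := hroot (a - b * c + c ^ 3)
    simp only at hr hru
    refine ⟨r - c, -b - 3 * (r - c) * c, ⟨?_, ?_⟩, ?_⟩
    · linear_combination (-d) * hr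
    · ring
    · rintro u v ⟨e1, e2⟩
      have f1 : a + b * u + c * v + (u * v - u ^ 3) = 0 :=
        mul_left_cancel₀ hd (by linear_combination e1)
      have f2 : b + c * (3 * u) + v = 0 :=
        mul_left_cancel₀ hd (by linear_combination e2)
      have hu : u + c = r := hru _ (by linear_combination -f1 + (c + u) * f2)
      subst hu
      exact ⟨by ring, by linear_combination f2⟩
end

section
/- Let K be a field. Every 3-dimensional subspace of K⁴ contains at most one member of O (i.e., O is a partial dual spread) if and only if the characteristic of K is not 3 and 1 is the only cube root of unity in K. (Thus O is a partial spread if and only if it is a partial dual spread.) -/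
/-- A linear form on `K⁴` in coordinates. -/
lemma bw_form_apply {K : Type*} [Field K] (f : (Fin 4 → K) →ₗ[K] K) (x : Fin 4 → K) :
    f x = x 0 * f (Pi.single 0 1) + x 1 * f (Pi.single 1 1) + x 2 * f (Pi.single 2 1)
      + x 3 * f (Pi.single 3 1) := by
  rw [LinearMap.pi_apply_eq_sum_univ f x]
  have h : ∀ i : Fin 4, (fun j => if i = j then (1 : K) else 0) = Pi.single i 1 := by
    intro i; ext j; simp [Pi.single_apply, eq_comm]
  simp [Fin.sum_univ_four, h]

/-- Algebraic core: a nonzero plane through two osculating tangents. -/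
lemma bw_core {K : Type*} [Field K] (h3 : (3 : K) ≠ 0) (hw : ∀ w : K, w ^ 3 = 1 → w = 1)
    (u₁ u₂ v₁ v₂ k0 k1 k2 k3 : K)
    (e1 : k0 + u₁ * k1 + u₂ * k2 + (u₁ * u₂ - u₁ ^ 3) * k3 = 0)
    (e2 : k1 + 3 * u₁ * k2 + u₂ * k3 = 0)
    (e3 : k0 + v₁ * k1 + v₂ * k2 + (v₁ * v₂ - v₁ ^ 3) * k3 = 0)
    (e4 : k1 + 3 * v₁ * k2 + v₂ * k3 = 0)
    (hne : ¬ (k0 = 0 ∧ k1 = 0 ∧ k2 = 0 ∧ k3 = 0)) : u₁ = v₁ ∧ u₂ = v₂ := by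
  obtain ⟨a, rfl⟩ : ∃ a, v₁ = u₁ + a := ⟨v₁ - u₁, by ring⟩
  obtain ⟨B, rfl⟩ : ∃ B, v₂ = u₂ + (B + 3 * u₁ * a) := ⟨v₂ - u₂ - 3 * u₁ * a, by ring⟩
  have hD : B ^ 2 - 3 * a ^ 2 * B + 3 * a ^ 4 = 0 := by
    by_contra hD
    have z3 : k3 = 0 := (mul_eq_zero.1 (show (B ^ 2 - 3 * a ^ 2 * B + 3 * a ^ 4) * k3 = 0 by
      linear_combination (3 * a ^ 2) * e2 - 3 * a * (e3 - e1) + B * (e4 - e2))).resolve_left hD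
    have z2 : k2 = 0 := (mul_eq_zero.1 (show (B ^ 2 - 3 * a ^ 2 * B + 3 * a ^ 4) * k2 = 0 by
      linear_combination (-(a * (B + 3 * u₁ * a))) * e2 + (B + 3 * u₁ * a) * (e3 - e1)
        - (((u₁ + a) * (u₂ + (B + 3 * u₁ * a)) - (u₁ + a) ^ 3) - (u₁ * u₂ - u₁ ^ 3) - u₂ * a) * (e4 - e2))).resolve_left hD
    have z1 : k1 = 0 := by simpa [z2, z3] using e2
    exact hne ⟨by simpa [z1, z2, z3] using e1, z1, z2, z3⟩
  by_cases ha : a = 0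
  · subst ha
    have : B = 0 := by simpa using hD
    simp [this]
  · exfalso
    have h1 : (1 - B / a ^ 2) ^ 2 + (1 - B / a ^ 2) + 1 = 0 := by
      field_simp
      linear_combination hD
    have h2 := hw (1 - B / a ^ 2) (by linear_combination (1 - B / a ^ 2 - 1) * h1)
    rw [h2] at h1
    exact h3 (by linear_combination h1)

/-- A linear form vanishing on an osculating tangent. -/
lemma bw_osc {K : Type*} [Field K] (f : (Fin 4 → K) →ₗ[K] K) (u₁ u₂ : K) :
    oscTang K u₁ u₂ ≤ LinearMap.ker f ↔
    f (Pi.single 0 1) + u₁ * f (Pi.single 1 1) + u₂ * f (Pi.single 2 1)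
      + (u₁ * u₂ - u₁ ^ 3) * f (Pi.single 3 1) = 0 ∧
    f (Pi.single 1 1) + 3 * u₁ * f (Pi.single 2 1) + u₂ * f (Pi.single 3 1) = 0 := by
  rw [oscTang, Submodule.span_le, Set.pair_subset_iff]
  simp only [SetLike.mem_coe, LinearMap.mem_ker]
  rw [bw_form_apply f (cayleyP K u₁ u₂), bw_form_apply f (cayleyD K u₁ u₂)]
  simp [cayleyP, cayleyD]

/-- A linear form vanishing on `g∞`. -/
lemma bw_gInf {K : Type*} [Field K] (f : (Fin 4 → K) →ₗ[K] K) (h : gInf K ≤ LinearMap.ker f) :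
    f (Pi.single 2 1) = 0 ∧ f (Pi.single 3 1) = 0 := by
  rw [gInf, Submodule.span_le, Set.pair_subset_iff] at h
  simp only [SetLike.mem_coe, LinearMap.mem_ker] at h
  rw [bw_form_apply f ![0, 0, 1, 0], bw_form_apply f ![0, 0, 0, 1]] at h
  simpa using h

/-- An osculating tangent and `g∞` span the whole space. -/
lemma bw_mixed {K : Type*} [Field K] (f : (Fin 4 → K) →ₗ[K] K) (u₁ u₂ : K)
    (h : gInf K ≤ LinearMap.ker f) (h' : oscTang K u₁ u₂ ≤ LinearMap.ker f) : f = 0 := by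
  obtain ⟨z2, z3⟩ := bw_gInf f h
  obtain ⟨e1, e2⟩ := (bw_osc f u₁ u₂).1 h'
  have z1 : f (Pi.single 1 1) = 0 := by simpa [z2, z3] using e2
  have z0 : f (Pi.single 0 1) = 0 := by simpa [z1, z2, z3] using e1
  ext x
  simp only [LinearMap.zero_apply, LinearMap.comp_apply]
  rw [bw_form_apply]
  simp [z0, z1, z2, z3]

/-- If `w² + w + 1 = 0` then two members lie in a plane. -/
lemma bw_bad {K : Type*} [Field K] (w : K) (hw : w ^ 2 + w + 1 = 0)
    (H : ∀ H : Submodule K (Fin 4 → K), Module.finrank K H = 3 →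
        ∀ ℓ ∈ BWset K, ∀ m ∈ BWset K, ℓ ≤ H → m ≤ H → ℓ = m) : False := by
  have w0 : w ≠ 0 := by rintro rfl; simp at hw
  let f : (Fin 4 → K) →ₗ[K] K := w • LinearMap.proj 2 + (1 - w) • LinearMap.proj 3
  have f0 : f (Pi.single 0 1) = 0 := by simp [f]
  have f1 : f (Pi.single 1 1) = 0 := by simp [f]
  have f2 : f (Pi.single 2 1) = w := by simp [f]
  have f3 : f (Pi.single 3 1) = 1 - w := by simp [f]
  have hf : f ≠ 0 := by
    intro h
    rw [h] at f2
    exact w0 (by simpa using f2.symm)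
  have hk := Module.Dual.finrank_ker_add_one_of_ne_zero (f := f) hf
  have hk' : Module.finrank K (LinearMap.ker f) = 3 := by simpa using hk
  have heq := H (LinearMap.ker f) hk' _ (Or.inl ⟨0, 0, rfl⟩) _ (Or.inl ⟨1, 1 - w, rfl⟩)
    ((bw_osc f _ _).2 (by rw [f0, f1, f2, f3]; constructor <;> ring))
    ((bw_osc f _ _).2 (by
      rw [f0, f1, f2, f3]
      constructor
      · ring
      · linear_combination hw))
  have h1 : oscTang K 0 0 ≤ LinearMap.ker (LinearMap.proj 3 : (Fin 4 → K) →ₗ[K] K) :=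
    (bw_osc _ _ _).2 (by simp)
  rw [heq] at h1
  have h2 := ((bw_osc _ _ _).1 h1).1
  simp at h2
  exact w0 h2

/-- every 3-dimensional subspace of `K⁴` contains at most one member of
`O` (i.e. `O` is a partial dual spread) iff `char K ≠ 3` and `1` is the only cube
root of unity in `K`. -/
theorem bw_partial_dual_spread_iff (K : Type*) [Field K] :
    (∀ H : Submodule K (Fin 4 → K), Module.finrank K H = 3 →
        ∀ ℓ ∈ BWset K, ∀ m ∈ BWset K, ℓ ≤ H → m ≤ H → ℓ = m) ↔
      (ringChar K ≠ 3 ∧ ∀ w : K, w ^ 3 = 1 → w = 1) := by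
  constructor
  · intro H
    refine ⟨fun h => ?_, fun w hw => ?_⟩
    · have h3 : ((3 : ℕ) : K) = 0 := by rw [← h]; exact ringChar.Nat.cast_ringChar
      push_cast at h3
      exact bw_bad (1 : K) (by linear_combination h3) H
    · by_contra hne
      refine bw_bad w ?_ H
      have : (w - 1) * (w ^ 2 + w + 1) = 0 := by linear_combination hw
      exact (mul_eq_zero.1 this).resolve_left (sub_ne_zero.2 hne)
  · rintro ⟨hc, hw⟩ H hH ℓ hl m hm hlH hmH
    have h3 : (3 : K) ≠ 0 := by
      intro h
      exact hc (CharP.ringChar_of_prime_eq_zero Nat.prime_three (by exact_mod_cast h))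
    have hlt : H < ⊤ := by
      rw [lt_top_iff_ne_top]
      rintro rfl
      simp at hH
    obtain ⟨f, hf, hHf⟩ := Submodule.exists_le_ker_of_lt_top H hlt
    have hlf := hlH.trans hHf
    have hmf := hmH.trans hHf
    rcases hl with ⟨u₁, u₂, rfl⟩ | rfl <;> rcases hm with ⟨v₁, v₂, rfl⟩ | rfl
    · obtain ⟨e1, e2⟩ := (bw_osc f _ _).1 hlf
      obtain ⟨e3, e4⟩ := (bw_osc f _ _).1 hmf
      obtain ⟨rfl, rfl⟩ := bw_core h3 hw u₁ u₂ v₁ v₂ _ _ _ _ e1 e2 e3 e4 (by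
        rintro ⟨z0, z1, z2, z3⟩
        apply hf
        refine LinearMap.ext fun x => ?_
        rw [bw_form_apply]
        simp [z0, z1, z2, z3])
      rfl
    · exact absurd (bw_mixed f _ _ hmf hlf) hf
    · exact absurd (bw_mixed f _ _ hlf hmf) hf
    · rfl
end

section
/- Let K be a field. For all u₁, u₂, s ∈ K one has f(P(u₁,u₂) + s·d(u₁,u₂)) = −s³ and f(d(u₁,u₂)) = −1. Consequently, the nonzero vectors x in the osculating tangent ℓ(u₁,u₂) with f(x) = 0 are exactly the nonzero scalar multiples of P(u₁,u₂); that is, the osculating tangent meets the Cayley surface F precisely in the single point P(u₁,u₂) (with multiplicity three). -/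
/-- `f(P(u₁,u₂) + s·d(u₁,u₂)) = −s³`, `f(d(u₁,u₂)) = −1`, and the
nonzero vectors of `ℓ(u₁,u₂)` lying on the Cayley surface are exactly the nonzero
scalar multiples of `P(u₁,u₂)`. -/
theorem oscTang_meets_cayley_once (K : Type*) [Field K] (u₁ u₂ : K) :
    (∀ s : K, cayleyF (cayleyP K u₁ u₂ + s • cayleyD K u₁ u₂) = -s ^ 3) ∧
      cayleyF (cayleyD K u₁ u₂) = -1 ∧
      (∀ x ∈ oscTang K u₁ u₂, x ≠ 0 →
        (cayleyF x = 0 ↔ ∃ t : K, t ≠ 0 ∧ x = t • cayleyP K u₁ u₂)) := by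
  have key : ∀ a s : K,
      cayleyF (a • cayleyP K u₁ u₂ + s • cayleyD K u₁ u₂) = -s ^ 3 := by
    intro a s
    simp [cayleyF, cayleyP, cayleyD]
    ring
  refine ⟨fun s => ?_, ?_, ?_⟩
  · simpa using key 1 s
  · simpa using key 0 1
  · intro x hx hx0
    obtain ⟨a, s, rfl⟩ := Submodule.mem_span_pair.1 hx
    constructor
    · intro h
      rw [key] at h
      have hs : s = 0 := by simpa using h
      subst hs
      refine ⟨a, ?_, by simp⟩
      rintro rfl
      simp at hx0
    · rintro ⟨t, -, h⟩
      rw [h]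
      simpa using key t 0
end

section
/- Let K be a field of characteristic ≠ 3. A nonzero vector y = (y₀₁, y₀₂, y₀₃, y₁₂, y₁₃, y₂₃) ∈ K⁶ satisfies the four equations h₁(y) = 3y₀₁(y₁₂ + y₀₃) − y₀₂² = 0, h₂(y) = 3y₀₂y₁₃ − (y₁₂ + y₀₃)² = 0, h₃(y) = 9y₀₁y₁₃ − y₀₂(y₁₂ + y₀₃) = 0 and k(y) = y₀₁y₂₃ − y₀₂y₁₃ + y₀₃y₁₂ = 0 if and only if y is a nonzero scalar multiple of π(u₁,u₂) for some (u₁,u₂) ∈ K², or y = (0,0,0,0,a,b) for some (a,b) ≠ (0,0). (Hence the Klein image of O together with the pencil of lines in the plane x₀ = 0 through the point (0,0,0,1) equals the intersection of the variety V(h₁,h₂,h₃) with the Klein quadric.) -/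
/-- Plücker coordinate vector (ordered `y₀₁,y₀₂,y₀₃,y₁₂,y₁₃,y₂₃`) of the osculating
tangent `ℓ(u₁,u₂)` of the Cayley surface. -/
def piBW (K : Type*) [Field K] (u₁ u₂ : K) : Fin 6 → K :=
  ![1, 3 * u₁, u₂, 3 * u₁ ^ 2 - u₂, u₁ ^ 3, 3 * u₁ ^ 4 - 3 * u₁ ^ 2 * u₂ + u₂ ^ 2]

/-- The quadratic form `k(y) = y₀₁y₂₃ − y₀₂y₁₃ + y₀₃y₁₂` of the Klein quadric. -/
def kleinK {K : Type*} [Field K] (y : Fin 6 → K) : K :=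
  y 0 * y 5 - y 1 * y 4 + y 2 * y 3

/-- The form `h₁(y) = 3y₀₁(y₁₂ + y₀₃) − y₀₂²`. -/
def bwH1 {K : Type*} [Field K] (y : Fin 6 → K) : K :=
  3 * y 0 * (y 3 + y 2) - (y 1) ^ 2

/-- The form `h₂(y) = 3y₀₂y₁₃ − (y₁₂ + y₀₃)²`. -/
def bwH2 {K : Type*} [Field K] (y : Fin 6 → K) : K :=
  3 * y 1 * y 4 - (y 3 + y 2) ^ 2

/-- The form `h₃(y) = 9y₀₁y₁₃ − y₀₂(y₁₂ + y₀₃)`. -/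
def bwH3 {K : Type*} [Field K] (y : Fin 6 → K) : K :=
  9 * y 0 * y 4 - y 1 * (y 3 + y 2)

/-- for `char K ≠ 3`, a nonzero `y ∈ K⁶` satisfies
`h₁(y) = h₂(y) = h₃(y) = k(y) = 0` iff `y` is a nonzero scalar multiple of some
`π(u₁,u₂)`, or `y = (0,0,0,0,a,b)` with `(a,b) ≠ (0,0)`. -/
theorem bw_klein_image_eq_variety (K : Type*) [Field K] (hchar : ringChar K ≠ 3)
    (y : Fin 6 → K) (hy : y ≠ 0) :
    (bwH1 y = 0 ∧ bwH2 y = 0 ∧ bwH3 y = 0 ∧ kleinK y = 0) ↔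
      ((∃ t : K, t ≠ 0 ∧ ∃ u₁ u₂ : K, y = t • piBW K u₁ u₂) ∨
        (∃ a b : K, (a, b) ≠ (0, 0) ∧ y = ![0, 0, 0, 0, a, b])) := by
  have h3 : (3 : K) ≠ 0 := by
    intro h
    have hd : ringChar K ∣ 3 := (ringChar.spec K 3).1 (by exact_mod_cast h)
    rcases (Nat.dvd_prime Nat.prime_three).1 hd with h1 | h1
    · have h2 : ((1 : ℕ) : K) = 0 := (ringChar.spec K 1).2 (by rw [h1])
      simp at h2
    · exact hchar h1
  constructor
  · rintro ⟨e1, e2, e3, e4⟩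
    simp only [bwH1, bwH2, bwH3, kleinK] at e1 e2 e3 e4
    by_cases h0 : y 0 = 0
    · right
      have y1 : y 1 = 0 := by
        have : (y 1) ^ 2 = 0 := by rw [h0] at e1; linear_combination -e1
        exact pow_eq_zero_iff (two_ne_zero) |>.1 this
      have y32 : y 3 + y 2 = 0 := by
        have : (y 3 + y 2) ^ 2 = 0 := by rw [y1] at e2; linear_combination -e2
        exact pow_eq_zero_iff (two_ne_zero) |>.1 this
      have y2 : y 2 = 0 := by
        have : (y 2) ^ 2 = 0 := by
          rw [h0, y1] at e4; linear_combination y 2 * y32 - e4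
        exact pow_eq_zero_iff (two_ne_zero) |>.1 this
      have y3 : y 3 = 0 := by rw [y2] at y32; simpa using y32
      have hyy : y = ![0, 0, 0, 0, y 4, y 5] := by
        ext i
        fin_cases i <;> simp [h0, y1, y2, y3]
      refine ⟨y 4, y 5, ?_, hyy⟩
      intro hab
      rw [Prod.mk.injEq] at hab
      apply hy
      rw [hyy, hab.1, hab.2]
      ext i
      fin_cases i <;> rfl
    · left
      obtain ⟨u, hu⟩ : ∃ u, y 1 = y 0 * (3 * u) := ⟨y 1 / (3 * y 0), by field_simp⟩
      obtain ⟨v, hv⟩ : ∃ v, y 2 = y 0 * v := ⟨y 2 / y 0, by field_simp⟩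
      have y3 : y 3 = y 0 * (3 * u ^ 2 - v) := by
        rw [hu, hv] at e1
        apply mul_left_cancel₀ (mul_ne_zero h3 h0)
        linear_combination e1
      have y4 : y 4 = y 0 * u ^ 3 := by
        rw [hu, hv, y3] at e3
        apply mul_left_cancel₀ (mul_ne_zero (mul_ne_zero h3 h3) h0)
        linear_combination e3
      have y5 : y 5 = y 0 * (3 * u ^ 4 - 3 * u ^ 2 * v + v ^ 2) := by
        rw [hu, hv, y3, y4] at e4
        apply mul_left_cancel₀ h0
        linear_combination e4
      refine ⟨y 0, h0, u, v, ?_⟩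
      ext i
      fin_cases i
      · simp [piBW]
      · simpa [piBW] using hu
      · simpa [piBW] using hv
      · simpa [piBW] using y3
      · simpa [piBW] using y4
      · simpa [piBW] using y5
  · rintro (⟨t, _, u, v, rfl⟩ | ⟨a, b, _, rfl⟩)
    · simp only [bwH1, bwH2, bwH3, kleinK, piBW, Pi.smul_apply, smul_eq_mul, Matrix.cons_val]
      refine ⟨?_, ?_, ?_, ?_⟩ <;> ring
    · simp [bwH1, bwH2, bwH3, kleinK]
end

section
/- Let K be an infinite field of characteristic ≠ 3, and let h be a homogeneous polynomial in six variables over K such that h(π(u₁,u₂)) = 0 for all (u₁,u₂) ∈ K² and h(0,0,0,0,0,1) = 0 (i.e., h vanishes on the Klein image of the Betten–Walker line set O). Then h(0,0,0,0,a,b) = 0 for all a, b ∈ K (h vanishes on the Klein image of the whole pencil of lines in the plane x₀ = 0 with centre (0,0,0,1)). -/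
/-- Vanishing on the osculating tangents extends to every field extension. -/
theorem osc_ext {K L : Type*} [Field K] [Infinite K] [Field L] [Algebra K L]
    (h : MvPolynomial (Fin 6) K)
    (hosc : ∀ u₁ u₂ : K, MvPolynomial.eval (piBW K u₁ u₂) h = 0) (x y : L) :
    MvPolynomial.aeval (piBW L x y) h = 0 := by
  let P : Fin 6 → MvPolynomial (Fin 2) K :=
    ![1, 3 * .X 0, .X 1, 3 * .X 0 ^ 2 - .X 1, .X 0 ^ 3,
      3 * .X 0 ^ 4 - 3 * .X 0 ^ 2 * .X 1 + .X 1 ^ 2]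
  have key : ∀ (M : Type _) [Field M] [Algebra K M] (v : Fin 2 → M),
      MvPolynomial.aeval v (MvPolynomial.aeval P h) =
        MvPolynomial.aeval (piBW M (v 0) (v 1)) h := by
    intro M _ _ v
    rw [← AlgHom.comp_apply, MvPolynomial.comp_aeval]
    congr 2
    funext i
    fin_cases i <;> simp [P, piBW]
  have key' : ∀ v : Fin 2 → K, MvPolynomial.eval v (MvPolynomial.aeval P h) =
        MvPolynomial.eval (piBW K (v 0) (v 1)) h := by
    intro v
    rw [← MvPolynomial.coe_aeval_eq_eval, ← MvPolynomial.coe_aeval_eq_eval]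
    change MvPolynomial.aeval v (MvPolynomial.aeval P h) = MvPolynomial.aeval _ h
    rw [← AlgHom.comp_apply, MvPolynomial.comp_aeval]
    congr 2
    funext i
    fin_cases i <;> simp [P, piBW]
  have hz : MvPolynomial.aeval P h = 0 := by
    apply MvPolynomial.funext
    intro v
    rw [key', hosc, map_zero]
  have := key L ![x, y]
  rw [hz, map_zero] at this
  simpa using this.symm

/-- Homogeneous forms scale. -/
theorem hom_scale {K L : Type*} [Field K] [Field L] [Algebra K L]
    (n : ℕ) (h : MvPolynomial (Fin 6) K) (hhom : h.IsHomogeneous n) (c : L) (v : Fin 6 → L) :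
    MvPolynomial.aeval (fun i => c * v i) h = c ^ n * MvPolynomial.aeval v h := by
  simp only [MvPolynomial.aeval_def, MvPolynomial.eval₂_eq, Finset.mul_sum]
  refine Finset.sum_congr rfl fun d hd => ?_
  have hd' := hhom (MvPolynomial.mem_support_iff.mp hd)
  have : ∑ i ∈ d.support, d i = n := by
    rw [← hd', Finsupp.weight_apply, Finsupp.sum]; simp
  simp only [mul_pow, Finset.prod_mul_distrib, Finset.prod_pow_eq_pow_sum, this]
  ring

/-- The limit argument over an extension containing a root of `t² - 3t + 3`. -/
theorem limit_pt {K L : Type*} [Field K] [Infinite K] [Field L] [Algebra K L]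
    (n : ℕ) (h : MvPolynomial (Fin 6) K) (hhom : h.IsHomogeneous n)
    (hosc : ∀ u₁ u₂ : K, MvPolynomial.eval (piBW K u₁ u₂) h = 0)
    (w : L) (hw : w ^ 2 - 3 * w + 3 = 0) (c : L) :
    MvPolynomial.aeval (![0, 0, 0, 0, 1, c * (2 * w - 3)] : Fin 6 → L) h = 0 := by
  let R : L → Fin 6 → L := fun s => ![s ^ 3, 3 * s ^ 2, w * s + c * s ^ 2,
    (3 - w) * s - c * s ^ 2, 1, c * (2 * w - 3) + c ^ 2 * s]
  let Q : Fin 6 → Polynomial L := ![.X ^ 3, 3 * .X ^ 2, .C w * .X + .C c * .X ^ 2,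
    (3 - .C w) * .X - .C c * .X ^ 2, 1, .C (c * (2 * w - 3)) + .C (c ^ 2) * .X]
  have hQ : ∀ s : L, (MvPolynomial.aeval Q h).eval s = MvPolynomial.aeval (R s) h := by
    intro s
    have : (Polynomial.aeval s).restrictScalars K (MvPolynomial.aeval Q h) =
        MvPolynomial.aeval (R s) h := by
      rw [← AlgHom.comp_apply, MvPolynomial.comp_aeval]
      congr 2
      funext i
      fin_cases i <;> simp [Q, R]
    simpa [Polynomial.aeval_def, Polynomial.eval₂_eq_eval_map] using this
  have hne : ∀ s : L, s ≠ 0 → MvPolynomial.aeval (R s) h = 0 := by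
    intro s hs
    have h1 : R s = fun i => s ^ 3 * piBW L s⁻¹ (w * s⁻¹ ^ 2 + c * s⁻¹) i := by
      funext i
      fin_cases i
      · simp [R, piBW]
      · simp [R, piBW]; field_simp
      · simp [R, piBW]; field_simp
      · simp [R, piBW]; field_simp; ring
      · simp [R, piBW]; field_simp
      · simp [R, piBW]; field_simp
        linear_combination (-1 : L) * hw
    rw [h1, hom_scale n h hhom, osc_ext h hosc, mul_zero]
  have : Infinite L := Infinite.of_injective _ (algebraMap K L).injective
  have hz : Polynomial.X * MvPolynomial.aeval Q h = 0 := by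
    apply Polynomial.funext
    intro s
    rw [Polynomial.eval_mul, hQ]
    by_cases hs : s = 0
    · simp [hs]
    · simp [hne s hs]
  have hz' := (mul_eq_zero.mp hz).resolve_left Polynomial.X_ne_zero
  have := hQ 0
  rw [hz'] at this
  simpa [R] using this.symm

/-- over an infinite field of characteristic `≠ 3`, every homogeneous
polynomial in six variables vanishing on the Klein image of the Betten–Walker line
set `O` also vanishes on the Klein image of the pencil of lines in the plane
`x₀ = 0` with centre `(0,0,0,1)`. -/
theorem bw_vanishing_form_vanishes_on_pencil (K : Type*) [Field K] [Infinite K]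
    (hchar : ringChar K ≠ 3) (n : ℕ) (h : MvPolynomial (Fin 6) K)
    (hhom : h.IsHomogeneous n)
    (hosc : ∀ u₁ u₂ : K, MvPolynomial.eval (piBW K u₁ u₂) h = 0)
    (hginf : MvPolynomial.eval (![0, 0, 0, 0, 0, 1] : Fin 6 → K) h = 0) :
    ∀ a b : K, MvPolynomial.eval (![0, 0, 0, 0, a, b] : Fin 6 → K) h = 0 := by
  intro a b
  have toL : ∀ v : Fin 6 → K, MvPolynomial.aeval v h = MvPolynomial.eval v h := fun v => by
    rw [← MvPolynomial.coe_aeval_eq_eval]; rfl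
  by_cases ha : a = 0
  · have h1 : (![0, 0, 0, 0, a, b] : Fin 6 → K) =
        fun i => b * (![0, 0, 0, 0, 0, 1] : Fin 6 → K) i := by
      funext i
      fin_cases i <;> simp [ha]
    rw [← toL, h1, hom_scale n h hhom, toL, hginf, mul_zero]
  have h3 : (3 : K) ≠ 0 := by
    intro h3
    have hd : ringChar K ∣ 3 := (ringChar.spec K 3).mp (by exact_mod_cast h3)
    rcases (Nat.dvd_prime Nat.prime_three).mp hd with h | h
    · have := (ringChar.spec K 1).mpr (by rw [h])
      simp at this
    · exact hchar h
  let L := AlgebraicClosure K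
  have h3L : (3 : L) ≠ 0 := by
    have := (map_ne_zero (algebraMap K L)).mpr h3
    rwa [map_ofNat] at this
  obtain ⟨w, hw⟩ : ∃ w : L, w ^ 2 - 3 * w + 3 = 0 := by
    let p : Polynomial L := .C 1 * .X ^ 2 + .C (-3) * .X + .C 3
    have hp : p.degree = 2 := Polynomial.degree_quadratic one_ne_zero
    obtain ⟨w, hw⟩ := IsAlgClosed.exists_root p (by rw [hp]; decide)
    refine ⟨w, ?_⟩
    simp only [p, Polynomial.IsRoot, Polynomial.eval_add, Polynomial.eval_mul,
      Polynomial.eval_C, Polynomial.eval_pow, Polynomial.eval_X] at hw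
    linear_combination hw
  have hd : 2 * w - 3 ≠ 0 := by
    intro hd
    apply h3L
    linear_combination 4 * hw - (2 * w - 3) * hd
  have key := limit_pt n h hhom hosc w hw (algebraMap K L (b / a) / (2 * w - 3))
  rw [div_mul_cancel₀ _ hd] at key
  have h1 : (![0, 0, 0, 0, a, b] : Fin 6 → K) =
      fun i => a * (![0, 0, 0, 0, 1, b / a] : Fin 6 → K) i := by
    funext i
    fin_cases i <;> simp
    field_simp
  rw [← toL, h1, hom_scale n h hhom]
  have h2 : (![0, 0, 0, 0, 1, algebraMap K L (b / a)] : Fin 6 → L) =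
      fun i => algebraMap K L ((![0, 0, 0, 0, 1, b / a] : Fin 6 → K) i) := by
    funext i
    fin_cases i <;> simp
  have h4 : MvPolynomial.aeval (![0, 0, 0, 0, 1, b / a] : Fin 6 → K) h = 0 := by
    apply (algebraMap K L).injective
    rw [map_zero, ← key, h2]
    exact (MvPolynomial.aeval_algebraMap_apply L _ h).symm
  rw [h4, mul_zero]
end

section
/- Let K be an infinite field of characteristic ≠ 3, and let S ⊆ K⁶ \ {0} be the cone over the Klein image of the Betten–Walker line set O, namely S = { t·π(u₁,u₂) : t ∈ K \ {0}, (u₁,u₂) ∈ K² } ∪ { t·(0,0,0,0,0,1) : t ∈ K \ {0} }. Then there is no family H of homogeneous polynomials in six variables over K such that S equals the set of nonzero common zeros of H; in other words, the infinite Betten–Walker spread is not an algebraic set of lines. -/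
theorem aeval_smul_zero {K L : Type*} [Field K] [Field L] [Algebra K L]
    (h : MvPolynomial (Fin 6) K) (n : ℕ) (hn : h.IsHomogeneous n) (c : L) (x : Fin 6 → L)
    (hx : MvPolynomial.aeval x h = 0) : MvPolynomial.aeval (c • x) h = 0 := by
  have key : MvPolynomial.aeval (c • x) h = c ^ n * MvPolynomial.aeval x h := by
    rw [MvPolynomial.aeval_def, MvPolynomial.aeval_def, MvPolynomial.eval₂_eq',
      MvPolynomial.eval₂_eq', Finset.mul_sum]
    refine Finset.sum_congr rfl fun d hd => ?_
    have hdeg : ∑ i, d i = n := by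
      have := hn (MvPolynomial.mem_support_iff.1 hd)
      rw [← this, Finsupp.weight_apply, Finsupp.sum_fintype _ _ (by simp)]
      simp
    simp only [Pi.smul_apply, smul_eq_mul, mul_pow, Finset.prod_mul_distrib,
      Finset.prod_pow_eq_pow_sum, hdeg]
    ring
  rw [key, hx, mul_zero]

/-- The parametrisation over an arbitrary commutative ring. -/
def vecBW (R : Type*) [CommRing R] (u v : R) : Fin 6 → R :=
  ![1, 3 * u, v, 3 * u ^ 2 - v, u ^ 3, 3 * u ^ 4 - 3 * u ^ 2 * v + v ^ 2]

theorem map_vecBW {R S : Type*} [CommRing R] [CommRing S] (f : R →+* S) (u v : R) :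
    (fun i => f (vecBW R u v i)) = vecBW S (f u) (f v) := by
  funext i
  fin_cases i <;> simp [vecBW, map_ofNat]

theorem key_vanish (K : Type*) [Field K] [Infinite K] (h : MvPolynomial (Fin 6) K) (n : ℕ)
    (hn : h.IsHomogeneous n)
    (hz : ∀ u v : K, MvPolynomial.eval (piBW K u v) h = 0) :
    MvPolynomial.eval (![0, 0, 0, 0, 1, 0] : Fin 6 → K) h = 0 := by
  -- the pulled back polynomial in two variables vanishes
  have h1 : MvPolynomial.aeval
      (vecBW (MvPolynomial (Fin 2) K) (MvPolynomial.X 0) (MvPolynomial.X 1)) h = 0 := by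
    apply MvPolynomial.funext
    intro x
    have := hz (x 0) (x 1)
    rw [← MvPolynomial.coe_aeval_eq_eval, RingHom.coe_coe] at this
    have e := map_vecBW (MvPolynomial.aeval (R := K) x).toRingHom
      (MvPolynomial.X 0) (MvPolynomial.X 1)
    simp only [AlgHom.toRingHom_eq_coe, RingHom.coe_coe, MvPolynomial.aeval_X] at e
    rw [map_zero, ← MvPolynomial.coe_aeval_eq_eval, RingHom.coe_coe, ← AlgHom.comp_apply,
      MvPolynomial.comp_aeval, e]
    exact this
  let L := AlgebraicClosure K
  have h2 : ∀ u v : L, MvPolynomial.aeval (vecBW L u v) h = 0 := by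
    intro u v
    have := congrArg (MvPolynomial.aeval (R := K) ![u, v]) h1
    rw [← AlgHom.comp_apply, MvPolynomial.comp_aeval, map_zero] at this
    have e := map_vecBW (MvPolynomial.aeval (R := K) ![u, v]).toRingHom
      (MvPolynomial.X 0) (MvPolynomial.X 1)
    simp only [AlgHom.toRingHom_eq_coe, RingHom.coe_coe, MvPolynomial.aeval_X] at e
    simp at e
    rw [← this, ← e]
  obtain ⟨a, ha⟩ : ∃ a : L, a ^ 2 - 3 * a + 3 = 0 := by
    have hd : (Polynomial.X ^ 2 - Polynomial.C 3 * Polynomial.X + Polynomial.C 3 :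
        Polynomial L).degree = 2 := by compute_degree!
    obtain ⟨a, ha⟩ := IsAlgClosed.exists_root _ (by rw [hd]; decide)
    exact ⟨a, by simpa using ha⟩
  let W : Fin 6 → Polynomial L := ![Polynomial.X ^ 3, 3 * Polynomial.X ^ 2,
    Polynomial.C a * Polynomial.X, Polynomial.C (3 - a) * Polynomial.X, 1, 0]
  have hW : ∀ s : L, (MvPolynomial.aeval W h).eval s =
      MvPolynomial.aeval (![s ^ 3, 3 * s ^ 2, a * s, (3 - a) * s, 1, 0] : Fin 6 → L) h := by
    intro s
    have : (Polynomial.aeval s).restrictScalars K (MvPolynomial.aeval W h) = 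
      MvPolynomial.aeval (![s ^ 3, 3 * s ^ 2, a * s, (3 - a) * s, 1, 0] : Fin 6 → L) h := by
      rw [← AlgHom.comp_apply, MvPolynomial.comp_aeval]
      congr 2
      funext i
      fin_cases i <;> simp [W]
    rw [← this]
    simp [Polynomial.aeval_def, Polynomial.eval₂_eq_eval_map]
  have h3 : MvPolynomial.aeval W h * Polynomial.X = 0 := by
    apply Polynomial.funext
    intro s
    rw [Polynomial.eval_mul, hW, Polynomial.eval_X, Polynomial.eval_zero]
    by_cases hs : s = 0
    · rw [hs, mul_zero]
    · have e : (![s ^ 3, 3 * s ^ 2, a * s, (3 - a) * s, 1, 0] : Fin 6 → L) =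
          s ^ 3 • vecBW L s⁻¹ (a * s⁻¹ ^ 2) := by
        funext i
        have hp : s * s⁻¹ = 1 := mul_inv_cancel₀ hs
        fin_cases i
        · show s ^ 3 = s ^ 3 * 1
          ring
        · show 3 * s ^ 2 = s ^ 3 * (3 * s⁻¹)
          linear_combination (-3*s^2)*hp
        · show a * s = s ^ 3 * (a * s⁻¹ ^ 2)
          linear_combination (-a*s*(s*s⁻¹+1))*hp
        · show (3 - a) * s = s ^ 3 * (3 * s⁻¹ ^ 2 - a * s⁻¹ ^ 2)
          linear_combination (-(3-a)*s*(s*s⁻¹+1))*hp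
        · show 1 = s ^ 3 * s⁻¹ ^ 3
          linear_combination (-(s^2*s⁻¹^2+s*s⁻¹+1))*hp
        · show 0 = s ^ 3 * (3 * s⁻¹ ^ 4 - 3 * s⁻¹ ^ 2 * (a * s⁻¹ ^ 2) + (a * s⁻¹ ^ 2) ^ 2)
          linear_combination (-(s ^ 3 * s⁻¹ ^ 4)) * ha
      have e2 := h2 s⁻¹ (a * s⁻¹ ^ 2)
      rw [e, aeval_smul_zero h n hn _ _ e2, zero_mul]
  have h4 : MvPolynomial.aeval W h = 0 := by
    rcases mul_eq_zero.1 h3 with h | h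
    · exact h
    · exact absurd h Polynomial.X_ne_zero
  have h5 := hW 0
  rw [h4, Polynomial.eval_zero] at h5
  apply (algebraMap K L).injective
  rw [map_zero, h5, ← MvPolynomial.coe_aeval_eq_eval, RingHom.coe_coe]
  have := MvPolynomial.aeval_algebraMap_apply (B := L) (![0, 0, 0, 0, 1, 0] : Fin 6 → K) h
  rw [← this]
  congr 2
  funext i
  fin_cases i <;> simp

/-- over an infinite field of characteristic `≠ 3`, the cone `S` over
the Klein image of the Betten–Walker line set `O` is not the set of nonzero common
zeros of any family of homogeneous polynomials in six variables; i.e. the infinite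
Betten–Walker spread is not an algebraic set of lines. -/
theorem bw_spread_not_algebraic (K : Type*) [Field K] [Infinite K]
    (hchar : ringChar K ≠ 3) :
    ¬ ∃ H : Set (MvPolynomial (Fin 6) K),
        (∀ h ∈ H, ∃ n : ℕ, h.IsHomogeneous n) ∧
        {y : Fin 6 → K | y ≠ 0 ∧ ∀ h ∈ H, MvPolynomial.eval y h = 0} =
          ({y | ∃ t : K, t ≠ 0 ∧ ∃ u₁ u₂ : K, y = t • piBW K u₁ u₂} ∪
            {y | ∃ t : K, t ≠ 0 ∧ y = t • (![0, 0, 0, 0, 0, 1] : Fin 6 → K)}) := by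
  rintro ⟨H, hH, hS⟩
  have hmem : (![0, 0, 0, 0, 1, 0] : Fin 6 → K) ∈
      {y : Fin 6 → K | y ≠ 0 ∧ ∀ h ∈ H, MvPolynomial.eval y h = 0} := by
    refine ⟨fun h => by simpa using congrFun h 4, fun h hh => ?_⟩
    obtain ⟨n, hn⟩ := hH h hh
    refine key_vanish K h n hn fun u v => ?_
    have hm : piBW K u v ∈ {y : Fin 6 → K | y ≠ 0 ∧ ∀ h ∈ H, MvPolynomial.eval y h = 0} := by
      rw [hS]
      exact Or.inl ⟨1, one_ne_zero, u, v, (one_smul _ _).symm⟩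
    exact hm.2 h hh
  rw [hS] at hmem
  rcases hmem with ⟨t, ht, u, v, e⟩ | ⟨t, ht, e⟩
  · have := congrFun e 0
    simp [piBW] at this
    exact ht this.symm
  · have := congrFun e 4
    simp at this
end

section
/- Let K be a field of characteristic 3. Every vector π₃(u₁,u₂) := (1, 0, u₂, −u₂, u₁³, u₂²) (this is the Plücker vector of the osculating tangent ℓ(u₁,u₂) in characteristic 3) and every vector (0,0,0,0,a,b) satisfies the equations y₀₂ = 0, y₀₃ + y₁₂ = 0 and k(y) = y₀₁y₂₃ − y₀₂y₁₃ + y₀₃y₁₂ = 0, which define a parabolic linear congruence N. Moreover, the set of ALL nonzero y ∈ K⁶ satisfying these three equations equals the set of nonzero scalar multiples of the vectors π₃(u₁,u₂), (u₁,u₂) ∈ K², together with the vectors (0,0,0,0,a,b), (a,b) ≠ (0,0), if and only if every element of K has a cube root in K. -/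
/-- Plücker coordinate vector (ordered `y₀₁,y₀₂,y₀₃,y₁₂,y₁₃,y₂₃`) of the osculating
tangent `ℓ(u₁,u₂)` of the Cayley surface in characteristic `3`. -/
def piBW3 (K : Type*) [Field K] (u₁ u₂ : K) : Fin 6 → K :=
  ![1, 0, u₂, -u₂, u₁ ^ 3, u₂ ^ 2]

/-- The three equations `y₀₂ = 0`, `y₀₃ + y₁₂ = 0`, `k(y) = 0` defining the
parabolic linear congruence `N` in characteristic `3`. -/
def inCongN {K : Type*} [Field K] (y : Fin 6 → K) : Prop :=
  y 1 = 0 ∧ y 2 + y 3 = 0 ∧ kleinK y = 0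

/-- in characteristic `3` all Plücker vectors `π₃(u₁,u₂)` of osculating
tangents and all vectors `(0,0,0,0,a,b)` lie in the parabolic linear congruence `N`
given by `y₀₂ = 0`, `y₀₃ + y₁₂ = 0`, `k(y) = 0`; moreover `N` consists exactly of
the nonzero scalar multiples of the `π₃(u₁,u₂)` together with the vectors
`(0,0,0,0,a,b)`, `(a,b) ≠ (0,0)`, iff every element of `K` has a cube root. -/
theorem bw_char_three_congruence (K : Type*) [Field K] (hchar : ringChar K = 3) :
    (∀ u₁ u₂ : K, inCongN (piBW3 K u₁ u₂)) ∧
      (∀ a b : K, inCongN (![0, 0, 0, 0, a, b] : Fin 6 → K)) ∧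
      ((∀ y : Fin 6 → K, y ≠ 0 →
          (inCongN y ↔
            (∃ t : K, t ≠ 0 ∧ ∃ u₁ u₂ : K, y = t • piBW3 K u₁ u₂) ∨
              (∃ a b : K, (a, b) ≠ (0, 0) ∧ y = ![0, 0, 0, 0, a, b]))) ↔
        (∀ a : K, ∃ r : K, r ^ 3 = a)) := by
  refine ⟨?_, ?_, ?_, ?_⟩
  · intro u₁ u₂
    refine ⟨by simp [piBW3], by simp [piBW3], ?_⟩
    simp [piBW3, kleinK]
    ring
  · intro a b
    refine ⟨by simp, by simp, ?_⟩
    simp [kleinK]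
  · intro h a
    have hne : (![1, 0, 0, 0, a, 0] : Fin 6 → K) ≠ 0 := by
      intro h0
      have := congrFun h0 0
      simp at this
    have hN : inCongN (![1, 0, 0, 0, a, 0] : Fin 6 → K) := by
      refine ⟨by simp, by simp, ?_⟩
      simp [kleinK]
    rcases (h _ hne).1 hN with ⟨t, ht, u₁, u₂, hy⟩ | ⟨c, d, hcd, hy⟩
    · have h0 := congrFun hy 0
      have h4 := congrFun hy 4
      simp [piBW3] at h0 h4
      refine ⟨u₁, ?_⟩
      rw [h4, ← h0, one_mul]
    · have h0 := congrFun hy 0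
      simp at h0
  · intro hc y hy
    constructor
    · rintro ⟨h1, h23, hk⟩
      have h3 : y 3 = - y 2 := by linear_combination h23
      have hk' : y 0 * y 5 = y 2 ^ 2 := by
        unfold kleinK at hk
        rw [h1, h3] at hk
        linear_combination hk
      by_cases h0 : y 0 = 0
      · right
        have h2 : y 2 = 0 := by
          rw [h0, zero_mul] at hk'
          exact pow_eq_zero_iff (two_ne_zero) |>.1 hk'.symm
        have hyy : y = ![0, 0, 0, 0, y 4, y 5] := by
          funext i
          fin_cases i <;> simp [h0, h1, h2, h3]
        refine ⟨y 4, y 5, ?_, hyy⟩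
        intro h
        rw [Prod.mk.injEq] at h
        apply hy
        rw [hyy, h.1, h.2]
        funext i
        fin_cases i <;> rfl
      · left
        obtain ⟨r, hr⟩ := hc (y 4 / y 0)
        refine ⟨y 0, h0, r, y 2 / y 0, ?_⟩
        have e2 : y 0 * (y 2 / y 0) = y 2 := by field_simp
        have e4 : y 0 * (y 4 / y 0) = y 4 := by field_simp
        have e5 : y 0 * (y 2 / y 0) ^ 2 = y 5 := by
          field_simp
          linear_combination -hk'
        funext i
        fin_cases i <;> simp [piBW3, hr, h1, h3, e2, e4, e5]
    · rintro (⟨t, ht, u₁, u₂, rfl⟩ | ⟨a, b, hab, rfl⟩)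
      · refine ⟨by simp [piBW3], by simp [piBW3], ?_⟩
        simp [piBW3, kleinK]
        ring
      · refine ⟨by simp, by simp, ?_⟩
        simp [kleinK]
end

section
/- Let K be a field of characteristic 3. A nonzero vector p = (p₀,p₁,p₂,p₃) ∈ K⁴ satisfies all four partial-derivative equations p₁p₂ − 2p₀p₃ = 0, p₀p₂ − 3p₁² = 0, p₀p₁ = 0, p₀² = 0 of the Cayley cubic f together with f(p) ≠ 0 if and only if p₀ = p₂ = 0 and p₁ ≠ 0. Thus the nuclei of the Cayley surface are exactly the points of the line V(X₀,X₂) other than Z = (0,0,0,1). -/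
/-- in characteristic `3`, a nonzero `p ∈ K⁴` satisfies all four
partial-derivative equations of the Cayley cubic together with `f(p) ≠ 0` iff
`p₀ = p₂ = 0` and `p₁ ≠ 0`; i.e. the nuclei of the Cayley surface are exactly the
points of the line `V(X₀,X₂)` other than `Z = (0,0,0,1)`. -/
theorem cayley_nuclei_char_three (K : Type*) [Field K] (hchar : ringChar K = 3)
    (p : Fin 4 → K) (hp : p ≠ 0) :
    (p 1 * p 2 - 2 * p 0 * p 3 = 0 ∧ p 0 * p 2 - 3 * (p 1) ^ 2 = 0 ∧
        p 0 * p 1 = 0 ∧ -((p 0) ^ 2) = 0 ∧ cayleyF p ≠ 0) ↔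
      (p 0 = 0 ∧ p 2 = 0 ∧ p 1 ≠ 0) := by
  have h3 : (3 : K) = 0 := by
    have h := ringChar.Nat.cast_ringChar (R := K)
    rw [hchar] at h
    exact_mod_cast h
  unfold cayleyF
  constructor
  · rintro ⟨h1, -, -, h4, h5⟩
    have h0 : p 0 = 0 := by simpa using h4
    have hp1 : p 1 ≠ 0 := by
      intro h
      apply h5
      simp [h0, h]
    refine ⟨h0, ?_, hp1⟩
    simpa [h0, hp1] using h1
  · rintro ⟨h0, h2, h1⟩
    simp [h0, h2, h1, h3]
end

section
/- Let K be a field. For a nonzero vector p = (p₀,p₁,p₂,p₃) ∈ K⁴, all four partial derivatives ∂₀f, ∂₁f, ∂₂f, ∂₃f of the Cayley cubic f vanish at p if and only if either p₀ = p₁ = 0, or p₀ = p₂ = 0 and the characteristic of K is 3. -/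
/-- for a nonzero `p ∈ K⁴`, all four partial derivatives of the Cayley
cubic `f` vanish at `p` iff either `p₀ = p₁ = 0`, or `p₀ = p₂ = 0` and `char K = 3`. -/
theorem cayley_singular_points (K : Type*) [Field K] (p : Fin 4 → K) (hp : p ≠ 0) :
    (p 1 * p 2 - 2 * p 0 * p 3 = 0 ∧ p 0 * p 2 - 3 * (p 1) ^ 2 = 0 ∧
        p 0 * p 1 = 0 ∧ -((p 0) ^ 2) = 0) ↔
      ((p 0 = 0 ∧ p 1 = 0) ∨ (p 0 = 0 ∧ p 2 = 0 ∧ ringChar K = 3)) := by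
  constructor
  · rintro ⟨h0, h1, -, h3⟩
    have hp0 : p 0 = 0 := by simpa using h3
    by_cases hp1 : p 1 = 0
    · exact Or.inl ⟨hp0, hp1⟩
    · right
      have hp2 : p 2 = 0 := by simpa [hp0, hp1] using h0
      have h3' : (3 : K) = 0 := by simpa [hp0, hp1] using h1
      refine ⟨hp0, hp2, ?_⟩
      have hd : ringChar K ∣ 3 := ringChar.dvd (by exact_mod_cast h3')
      rcases (Nat.dvd_prime Nat.prime_three).1 hd with h | h
      · exact absurd h (CharP.ringChar_ne_one)
      · exact h
  · rintro (⟨h0, h1⟩ | ⟨h0, h2, hc⟩)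
    · simp [h0, h1]
    · have h3 : (3 : K) = 0 := by
        have h := ringChar.Nat.cast_ringChar (R := K)
        rw [hc] at h
        exact_mod_cast h
      simp [h0, h2, h3]
end

section
/- Let K be a field with at least 4 elements. A 2-dimensional subspace W of K⁴ satisfies f(x) = 0 for all x ∈ W if and only if W = g(s₀,s₁) := span{(s₀², s₀s₁, s₁², 0), (0, 0, s₀, s₁)} for some (s₀,s₁) ∈ K² \ {(0,0)}. In other words, the lines contained in the Cayley surface F are exactly its generators g(s₀,s₁). -/
/-- The generator `g(s₀,s₁) = span{(s₀²,s₀s₁,s₁²,0), (0,0,s₀,s₁)}` of the Cayley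
surface. -/
def cayleyGen (K : Type*) [Field K] (s₀ s₁ : K) : Submodule K (Fin 4 → K) :=
  Submodule.span K {![s₀ ^ 2, s₀ * s₁, s₁ ^ 2, 0], ![0, 0, s₀, s₁]}

lemma mem_cayleyGen {K : Type*} [Field K] (s₀ s₁ : K) (x : Fin 4 → K) :
    x ∈ cayleyGen K s₀ s₁ ↔
      ∃ a b : K, a • ![s₀ ^ 2, s₀ * s₁, s₁ ^ 2, 0] + b • ![0, 0, s₀, s₁] = x := by
  unfold cayleyGen
  exact Submodule.mem_span_pair

lemma finrank_cayleyGen {K : Type*} [Field K] (s₀ s₁ : K) (h : (s₀, s₁) ≠ (0, 0)) :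
    Module.finrank K (cayleyGen K s₀ s₁) = 2 := by
  have hli : LinearIndependent K ![![s₀ ^ 2, s₀ * s₁, s₁ ^ 2, 0], ![0, 0, s₀, s₁]] := by
    rw [LinearIndependent.pair_iff]
    intro a b hab
    have h0 := congrFun hab 0
    have h2 := congrFun hab 2
    have h3 := congrFun hab 3
    simp at h0 h2 h3
    by_cases hs : s₀ = 0
    · have h1 : s₁ ≠ 0 := by
        rintro rfl
        exact h (by simp [hs])
      simp_all
    · have ha : a = 0 := by simpa [hs] using h0
      simp_all
  have := finrank_span_eq_card hli
  rw [Matrix.range_cons_cons_empty, Fintype.card_fin] at this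
  exact this

theorem cayley_lines_are_generators (K : Type*) [Field K]
    (hK : ∃ s : Finset K, 4 ≤ s.card)
    (W : Submodule K (Fin 4 → K)) (hW : Module.finrank K W = 2) :
    (∀ x ∈ W, cayleyF x = 0) ↔
      ∃ s₀ s₁ : K, (s₀, s₁) ≠ (0, 0) ∧ W = cayleyGen K s₀ s₁ := by
  constructor
  · intro hf
    by_cases hA : ∀ x ∈ W, x 0 = 0
    · refine ⟨0, 1, by simp, ?_⟩
      apply Submodule.eq_of_le_of_finrank_eq
      · intro x hx
        rw [mem_cayleyGen]
        have h0 := hA x hx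
        have h1 := hf x hx
        simp [cayleyF, h0] at h1
        refine ⟨x 2, x 3, ?_⟩
        ext i
        fin_cases i <;> simp [h0, h1]
      · rw [hW, finrank_cayleyGen _ _ (by simp)]
    · push Not at hA
      obtain ⟨w', hw', hw0'⟩ := hA
      obtain ⟨w, hw, hw0⟩ : ∃ w ∈ W, w 0 = 1 :=
        ⟨(w' 0)⁻¹ • w', W.smul_mem _ hw', by simp [hw0']⟩
      obtain ⟨x, hx, hxw⟩ : ∃ x ∈ W, x ∉ Submodule.span K {w} := by
        by_contra! hcon
        have h1 : Module.finrank K W ≤ Module.finrank K (Submodule.span K {w}) :=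
          Submodule.finrank_mono hcon
        have h2 := finrank_span_singleton (K := K) (v := w) (by rintro rfl; simp at hw0)
        omega
      obtain ⟨v, hv, hv0, hvne⟩ : ∃ v ∈ W, v 0 = 0 ∧ v ≠ 0 := by
        refine ⟨x - x 0 • w, W.sub_mem hx (W.smul_mem _ hw), by simp [hw0], ?_⟩
        intro h
        exact hxw (Submodule.mem_span_singleton.2 ⟨x 0, (sub_eq_zero.1 h).symm⟩)
      have hv1 : v 1 = 0 := by
        have := hf v hv
        simpa [cayleyF, hv0] using this
      have e1 := hf w hw
      have e2 := hf (w + v) (W.add_mem hw hv)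
      simp [cayleyF, hw0, hv0, hv1] at e1 e2
      have hq : v 3 = w 1 * v 2 := by linear_combination e1 - e2
      have hp : v 2 ≠ 0 := by
        intro hp
        apply hvne
        ext i
        fin_cases i <;> simp [hv0, hv1, hp, hq]
      have hu : ![0, 0, 1, w 1] ∈ W := by
        have : ![0, 0, 1, w 1] = (v 2)⁻¹ • v := by
          ext i
          fin_cases i <;> simp [hv0, hv1, hp, hq]
          field_simp
        rw [this]
        exact W.smul_mem _ hv
      have hz : ![1, w 1, (w 1) ^ 2, 0] ∈ W := by
        have : ![1, w 1, (w 1) ^ 2, 0] = w - (w 2 - (w 1) ^ 2) • ![0, 0, 1, w 1] := by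
          ext i
          fin_cases i <;> simp [hw0]
          linear_combination e1
        rw [this]
        exact W.sub_mem hw (W.smul_mem _ hu)
      refine ⟨1, w 1, by simp, ?_⟩
      symm
      apply Submodule.eq_of_le_of_finrank_eq
      · unfold cayleyGen
        rw [Submodule.span_le]
        rintro y (rfl | rfl)
        · simpa using hz
        · exact hu
      · rw [hW, finrank_cayleyGen _ _ (by simp)]
  · rintro ⟨s₀, s₁, -, rfl⟩ x hx
    obtain ⟨a, b, rfl⟩ := (mem_cayleyGen _ _ _).1 hx
    simp [cayleyF]
    ring
end

section
/- Let K be a field. For a, b ∈ K and c ∈ K \ {0}, let M_{a,b,c} be the 4×4 matrix with rows (1,0,0,0), (a,c,0,0), (b,3ac,c²,0), (ab−a³, bc, ac², c³). Then the set G = { M_{a,b,c} : a,b ∈ K, c ∈ K \ {0} } is a subgroup of GL₄(K), for every x ∈ K⁴ one has f(M_{a,b,c}·x) = c³·f(x) (so each M_{a,b,c} induces a projective collineation of P₃(K) mapping the Cayley surface F onto itself), and M_{u₁,u₂,1}·(1,0,0,0) = P(u₁,u₂) for all u₁,u₂ ∈ K (so G acts transitively on the affine points of F). -/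
/-- The matrix `M_{a,b,c}` with rows `(1,0,0,0)`, `(a,c,0,0)`, `(b,3ac,c²,0)`,
`(ab−a³,bc,ac²,c³)`. -/
def cayleyM {K : Type*} [Field K] (a b c : K) : Matrix (Fin 4) (Fin 4) K :=
  !![1, 0, 0, 0;
     a, c, 0, 0;
     b, 3 * a * c, c ^ 2, 0;
     a * b - a ^ 3, b * c, a * c ^ 2, c ^ 3]

theorem cayleyM_mul_aux {K : Type*} [Field K] (a b c a' b' c' : K) :
    cayleyM a b c * cayleyM a' b' c' =
      cayleyM (a + c * a') (b + 3 * a * c * a' + c ^ 2 * b') (c * c') := by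
  ext i j
  fin_cases i <;> fin_cases j <;>
    simp [cayleyM, Matrix.mul_apply, Fin.sum_univ_four] <;> ring

theorem cayleyM_one_aux {K : Type*} [Field K] : cayleyM (0 : K) 0 1 = 1 := by
  ext i j
  fin_cases i <;> fin_cases j <;> simp [cayleyM]

theorem cayleyM_inv_aux {K : Type*} [Field K] (a b c : K) (hc : c ≠ 0) :
    cayleyM a b c * cayleyM (-a / c) ((3 * a ^ 2 - b) / c ^ 2) c⁻¹ = 1 := by
  rw [cayleyM_mul_aux, ← cayleyM_one_aux]
  congr 1
  · field_simp
    ring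
  · field_simp
    ring
  · field_simp

/-- the matrices `M_{a,b,c}` (with `c ≠ 0`) form a subgroup `G` of
`GL₄(K)` (each is invertible, the identity is among them, and they are closed under
products and inverses), each `M_{a,b,c}` scales the Cayley form by `c³` (hence
induces a projective collineation preserving the Cayley surface), and
`M_{u₁,u₂,1}·(1,0,0,0)ᵀ = P(u₁,u₂)` (so `G` is transitive on the affine points of
the surface). -/
theorem cayley_collineation_group (K : Type*) [Field K] :
    (∀ a b c : K, c ≠ 0 → IsUnit (cayleyM a b c)) ∧
      cayleyM (0 : K) 0 1 = 1 ∧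
      (∀ a b c a' b' c' : K, c ≠ 0 → c' ≠ 0 →
        ∃ a'' b'' c'' : K, c'' ≠ 0 ∧
          cayleyM a b c * cayleyM a' b' c' = cayleyM a'' b'' c'') ∧
      (∀ a b c : K, c ≠ 0 →
        ∃ a' b' c' : K, c' ≠ 0 ∧ cayleyM a b c * cayleyM a' b' c' = 1) ∧
      (∀ a b c : K, ∀ x : Fin 4 → K,
        cayleyF ((cayleyM a b c).mulVec x) = c ^ 3 * cayleyF x) ∧
      (∀ u₁ u₂ : K, (cayleyM u₁ u₂ 1).mulVec ![1, 0, 0, 0] = cayleyP K u₁ u₂) := by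
  refine ⟨fun a b c hc => ?_, cayleyM_one_aux, fun a b c a' b' c' hc hc' => ?_,
    fun a b c hc => ?_, fun a b c x => ?_, fun u₁ u₂ => ?_⟩
  · exact IsUnit.of_mul_eq_one _ (cayleyM_inv_aux a b c hc)
  · exact ⟨_, _, _, mul_ne_zero hc hc', cayleyM_mul_aux a b c a' b' c'⟩
  · exact ⟨_, _, _, inv_ne_zero hc, cayleyM_inv_aux a b c hc⟩
  · simp [cayleyF, cayleyM, Matrix.mulVec, dotProduct, Fin.sum_univ_four]
    ring
  · ext i
    fin_cases i <;>
      simp [cayleyP, cayleyM, Matrix.mulVec, dotProduct, Fin.sum_univ_four]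
end

section
/- Let K be a field. A nonzero vector a = (a₀,a₁,a₂,a₃) ∈ K⁴ satisfies a₁a₂a₃ − a₂³ − a₀a₃² = 0 if and only if a is a nonzero scalar multiple either of (2u₁³ − u₁u₂, u₂ − 3u₁², u₁, −1) for some (u₁,u₂) ∈ K² (the coefficient vector of the tangent plane of the Cayley surface F at the affine point P(u₁,u₂)), or of (−s₃, s₂, 0, 0) for some (s₂,s₃) ≠ (0,0) (the coefficient vector of a tangent plane at a point (0,0,s₂,s₃) of the line at infinity of F). Hence the linear bijection (x₀,x₁,x₂,x₃) ↦ (x₃,x₂,x₁,x₀) is a duality of P₃(K) carrying the set of points of the Cayley surface onto the set of its tangent planes, and the set of tangent planes of F is a Cayley surface in the dual projective space. -/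
/-- The "dual" Cayley cubic form `a₁a₂a₃ − a₂³ − a₀a₃²` on coefficient vectors of
planes. -/
def cayleyFdual {K : Type*} [Field K] (a : Fin 4 → K) : K :=
  a 1 * a 2 * a 3 - (a 2) ^ 3 - a 0 * (a 3) ^ 2

/-- a nonzero `a ∈ K⁴` satisfies `a₁a₂a₃ − a₂³ − a₀a₃² = 0` iff `a` is
a nonzero scalar multiple of the coefficient vector `(2u₁³−u₁u₂, u₂−3u₁², u₁, −1)`
of the tangent plane at an affine point `P(u₁,u₂)`, or of the coefficient vector
`(−s₃, s₂, 0, 0)` of a tangent plane at a point `(0,0,s₂,s₃)` at infinity; moreover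
the linear bijection `(x₀,x₁,x₂,x₃) ↦ (x₃,x₂,x₁,x₀)` carries the Cayley surface
onto the set of its tangent planes, which is thus a Cayley surface in the dual
space. -/
theorem cayley_tangent_planes_dual_surface (K : Type*) [Field K] :
    (∀ a : Fin 4 → K, a ≠ 0 →
      (cayleyFdual a = 0 ↔
        (∃ t : K, t ≠ 0 ∧ ∃ u₁ u₂ : K,
            a = t • ![2 * u₁ ^ 3 - u₁ * u₂, u₂ - 3 * u₁ ^ 2, u₁, -1]) ∨
          (∃ t : K, t ≠ 0 ∧ ∃ s₂ s₃ : K, (s₂, s₃) ≠ (0, 0) ∧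
            a = t • ![-s₃, s₂, 0, 0]))) ∧
      (∀ x : Fin 4 → K, cayleyFdual ![x 3, x 2, x 1, x 0] = cayleyF x) := by
  refine ⟨fun a ha => ⟨fun h => ?_, ?_⟩, fun x => ?_⟩
  · unfold cayleyFdual at h
    by_cases h3 : a 3 = 0
    · right
      have h2 : a 2 = 0 := by
        rw [h3] at h
        have h' : (a 2) ^ 3 = 0 := by linear_combination -h
        exact pow_eq_zero_iff (three_ne_zero) |>.mp h'
      refine ⟨1, one_ne_zero, a 1, -a 0, ?_, ?_⟩
      · intro he
        rw [Prod.mk.injEq] at he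
        apply ha
        ext i
        fin_cases i
        · simpa using he.2
        · simpa using he.1
        · simpa using h2
        · simpa using h3
      · ext i
        fin_cases i <;> simp [h2, h3]
    · left
      refine ⟨-a 3, neg_ne_zero.mpr h3, -a 2 / a 3, -a 1 / a 3 + 3 * (-a 2 / a 3) ^ 2, ?_⟩
      ext i
      fin_cases i
      · simp
        field_simp
        linear_combination -h
      · simp
        field_simp
      · simp
        field_simp
      · simp
  · rintro (⟨t, ht, u₁, u₂, rfl⟩ | ⟨t, ht, s₂, s₃, hs, rfl⟩)
    · simp [cayleyFdual]
      ring
    · simp [cayleyFdual]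
  · simp [cayleyFdual, cayleyF]
    ring
end

section
/- Let K be a field and fix s ∈ K. Define the quadratic form Q_s(x) = x₁x₂ − x₀x₃ − 3s·x₁² + 3s²·x₀x₁ − s³·x₀² on K⁴. Then Q_s vanishes on every vector of the osculating tangent ℓ(s,u₂) for every u₂ ∈ K, and on every vector of g∞ = span{(0,0,1,0),(0,0,0,1)}. (Thus the osculating tangents of the Cayley surface at the points of the generator g(1,s), together with g∞, lie on a single quadric — the regulus R⁻(s) on the Lie quadric of F along g(1,s).) -/
/-- the quadratic form
`Q_s(x) = x₁x₂ − x₀x₃ − 3s·x₁² + 3s²·x₀x₁ − s³·x₀²` vanishes on every vector of each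
osculating tangent `ℓ(s,u₂)` and on every vector of `g∞`; thus the osculating
tangents at the points of the generator `g(1,s)`, together with `g∞`, lie on one
quadric (the regulus `R⁻(s)` on the Lie quadric). -/
theorem bw_regulus_on_quadric (K : Type*) [Field K] (s : K) :
    (∀ u₂ : K, ∀ x ∈ oscTang K s u₂,
        x 1 * x 2 - x 0 * x 3 - 3 * s * (x 1) ^ 2 + 3 * s ^ 2 * (x 0 * x 1)
          - s ^ 3 * (x 0) ^ 2 = 0) ∧
      (∀ x ∈ gInf K,
        x 1 * x 2 - x 0 * x 3 - 3 * s * (x 1) ^ 2 + 3 * s ^ 2 * (x 0 * x 1)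
          - s ^ 3 * (x 0) ^ 2 = 0) := by
  constructor
  · intro u₂ x hx
    obtain ⟨a, b, rfl⟩ := Submodule.mem_span_pair.1 hx
    simp [cayleyP, cayleyD]
    ring
  · intro x hx
    obtain ⟨a, b, rfl⟩ := Submodule.mem_span_pair.1 hx
    simp
end

section
/- Let K be a field and p₁, p₂, p₃ ∈ K. The vector (1, p₁, p₂, p₃) lies in the osculating tangent ℓ(u₁,u₂) for some (u₁,u₂) ∈ K² if and only if p₃ − p₁p₂ + p₁³ is a cube in K; in that case, writing s ∈ K with s³ = p₃ − p₁p₂ + p₁³, one may take u₁ = p₁ − s and u₂ = p₂ − 3s(p₁ − s). -/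
/-- the vector `(1,p₁,p₂,p₃)` lies on some osculating tangent
`ℓ(u₁,u₂)` iff `p₃ − p₁p₂ + p₁³` is a cube in `K`; and for any cube root `s` of
`p₃ − p₁p₂ + p₁³` one may take `u₁ = p₁ − s`, `u₂ = p₂ − 3s(p₁ − s)`. -/
theorem bw_affine_point_on_oscTang_iff (K : Type*) [Field K] (p₁ p₂ p₃ : K) :
    ((∃ u₁ u₂ : K, (![1, p₁, p₂, p₃] : Fin 4 → K) ∈ oscTang K u₁ u₂) ↔
        ∃ s : K, s ^ 3 = p₃ - p₁ * p₂ + p₁ ^ 3) ∧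
      (∀ s : K, s ^ 3 = p₃ - p₁ * p₂ + p₁ ^ 3 →
        (![1, p₁, p₂, p₃] : Fin 4 → K) ∈
          oscTang K (p₁ - s) (p₂ - 3 * s * (p₁ - s))) := by
  have key : ∀ s : K, s ^ 3 = p₃ - p₁ * p₂ + p₁ ^ 3 →
      (![1, p₁, p₂, p₃] : Fin 4 → K) ∈
        oscTang K (p₁ - s) (p₂ - 3 * s * (p₁ - s)) := by
    intro s hs
    rw [oscTang, Submodule.mem_span_pair]
    refine ⟨1, s, ?_⟩
    have h3 : p₃ = s ^ 3 + p₁ * p₂ - p₁ ^ 3 := by rw [hs]; ring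
    subst h3
    ext i
    fin_cases i <;> simp [cayleyP, cayleyD] <;> ring
  refine ⟨⟨?_, fun ⟨s, hs⟩ => ⟨_, _, key s hs⟩⟩, key⟩
  rintro ⟨u₁, u₂, h⟩
  rw [oscTang, Submodule.mem_span_pair] at h
  obtain ⟨a, b, h⟩ := h
  have h0 := congrFun h 0
  have h1 := congrFun h 1
  have h2 := congrFun h 2
  have h3 := congrFun h 3
  simp [cayleyP, cayleyD] at h0 h1 h2 h3
  subst h0
  refine ⟨b, ?_⟩
  rw [← h1, ← h2, ← h3]
  ring
end
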